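/- If k ≥ 2 and n ≥ 6(k−1), then the independence complex Ind(C^k_n) is c_{n,k}-connected, where c_{n,k} = ⌊(n+1)/(2k−1) − 2⌋. -/

import Mathlib

open SimpleGraph

/-- A claw in `G` on center `u` and leaves `v₁, v₂, v₃`. -/
def SimpleGraph.IsClaw {V : Type*} (G : SimpleGraph V) (u v₁ v₂ v₃ : V) : Prop :=
  v₁ ≠ v₂ ∧ v₁ ≠ v₃ ∧ v₂ ≠ v₃ ∧
  G.Adj u v₁ ∧ G.Adj u v₂ ∧ G.Adj u v₃ ∧
  ¬G.Adj v₁ v₂ ∧ ¬G.Adj v₁ v₃ ∧ ¬G.Adj v₂ v₃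

/-- A graph is claw-free if it has no induced claw. -/
def SimpleGraph.ClawFree {V : Type*} (G : SimpleGraph V) : Prop :=
  ∀ u v₁ v₂ v₃ : V, ¬ G.IsClaw u v₁ v₂ v₃

/-- The closed neighborhood `Ṅ(v) = N(v) ∪ {v}`. -/
def SimpleGraph.closedNbhd {V : Type*} (G : SimpleGraph V) (v : V) : Set V :=
  insert v (G.neighborSet v)

/-- The set of faces of the independence complex `Ind(G)`. -/
def indepFaces {V : Type*} (G : SimpleGraph V) : Set (Finset V) :=
  {s | ∀ a ∈ s, ∀ b ∈ s, ¬ G.Adj a b}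

/-- The geometric realization of an abstract simplicial complex with vertex set `V`. -/
def realization {V : Type*} (K : Set (Finset V)) : Type _ :=
  {f : V → ℝ // (∀ v, 0 ≤ f v) ∧ (∑ᶠ v, f v) = 1 ∧ ∃ s ∈ K, {v | f v ≠ 0} = ↑s}

instance {V : Type*} (K : Set (Finset V)) : TopologicalSpace (realization K) :=
  instTopologicalSpaceSubtype

/-- A space is `n`-connected (`n : ℤ`) if it is nonempty when `n ≥ -1` and every continuous
map from the `i`-sphere extends to the `(i+1)`-ball for all `0 ≤ i ≤ n`. -/
def IsNConnected (n : ℤ) (X : Type*) [TopologicalSpace X] : Prop :=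
  (-1 ≤ n → Nonempty X) ∧
  ∀ i : ℕ, (i : ℤ) ≤ n →
    ∀ f : C(Metric.sphere (0 : EuclideanSpace ℝ (Fin (i + 1))) 1, X),
      ∃ g : C(Metric.closedBall (0 : EuclideanSpace ℝ (Fin (i + 1))) 1, X),
        ∀ x : Metric.sphere (0 : EuclideanSpace ℝ (Fin (i + 1))) 1,
          g ⟨x.1, Metric.sphere_subset_closedBall x.2⟩ = f x

/-- Relation generating the unreduced suspension: glue `X × {0}` to a south pole and
`X × {1}` to a north pole. -/
def SuspRel (X : Type*) : X × unitInterval ⊕ Bool → X × unitInterval ⊕ Bool → Prop :=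
  fun a b => (∃ x, a = Sum.inl (x, 0) ∧ b = Sum.inr false) ∨
    (∃ x, a = Sum.inl (x, 1) ∧ b = Sum.inr true)

/-- The unreduced suspension of a space. -/
def Susp (X : Type*) [TopologicalSpace X] : Type _ := Quot (SuspRel X)

instance (X : Type*) [TopologicalSpace X] : TopologicalSpace (Susp X) :=
  instTopologicalSpaceQuot

/-- The north pole of a suspension. -/
def Susp.north (X : Type*) [TopologicalSpace X] : Susp X := Quot.mk _ (Sum.inr true)

/-- Relation generating the wedge sum of a family of pointed spaces. -/
def WedgeRel {ι : Type*} (X : ι → Type*) (pt : ∀ i, X i) :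
    (Σ i, X i) ⊕ Unit → (Σ i, X i) ⊕ Unit → Prop :=
  fun a b => ∃ i, a = Sum.inl ⟨i, pt i⟩ ∧ b = Sum.inr ()

/-- The wedge sum of a family of pointed spaces. -/
def Wedge {ι : Type*} (X : ι → Type*) [∀ i, TopologicalSpace (X i)] (pt : ∀ i, X i) :
    Type _ :=
  Quot (WedgeRel X pt)

instance {ι : Type*} (X : ι → Type*) [∀ i, TopologicalSpace (X i)] (pt : ∀ i, X i) :
    TopologicalSpace (Wedge X pt) :=
  instTopologicalSpaceQuot

/-- The graph `L^k_n`: vertices `{1, …, n}`, with `i < j` adjacent iff `j - i < k`. -/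
def lineGraphL (n k : ℕ) : SimpleGraph (Fin n) :=
  SimpleGraph.fromRel (fun i j => (i : ℕ) < j ∧ (j : ℕ) - i < k)

/-- The graph `C^k_n`: vertices `{1, …, n}`, with `i < j` adjacent iff `j - i < k` or
`(n + i) - j < k`. -/
def circGraphC (n k : ℕ) : SimpleGraph (Fin n) :=
  SimpleGraph.fromRel (fun i j => (i : ℕ) < j ∧ ((j : ℕ) - i < k ∨ (n + i) - j < k))

/-- One elementary collapse step: remove a free face `σ` together with the unique face
`τ` properly containing it (with `τ` of one dimension higher). -/
def ElemCollapse {V : Type*} (K L : Set (Finset V)) : Prop :=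
  ∃ σ τ : Finset V, σ ∈ K ∧ τ ∈ K ∧ σ ⊂ τ ∧ τ.card = σ.card + 1 ∧
    (∀ ρ ∈ K, σ ⊂ ρ → ρ = τ) ∧ L = K \ {σ, τ}

/-- `K` collapses onto `L` if there is a finite sequence of elementary collapses from
`K` to `L`. -/
def Collapses {V : Type*} (K L : Set (Finset V)) : Prop :=
  Relation.ReflTransGen ElemCollapse K L

/-- Every map from the unit sphere of `ℝᵈ` into `C` extends to a map from the closed unit ball
into `C`. -/
def SphereExtends {Y : Type*} [TopologicalSpace Y] (d : ℕ) (C : Set Y) : Prop :=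
  ∀ f : EuclideanSpace ℝ (Fin d) → Y, ContinuousOn f (Metric.sphere 0 1) →
    Set.MapsTo f (Metric.sphere 0 1) C →
    ∃ g : EuclideanSpace ℝ (Fin d) → Y, ContinuousOn g (Metric.closedBall 0 1) ∧
      Set.MapsTo g (Metric.closedBall 0 1) C ∧ Set.EqOn g f (Metric.sphere 0 1)

/-- The boundary of the cube `[0, r]^ι`. -/
def cubeBoundary (ι : Type*) (r : ℝ) : Set (ι → ℝ) :=
  {x | x ∈ Set.Icc 0 (fun _ => r) ∧ ∃ i, x i = 0 ∨ x i = r}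

theorem cubeBoundary_subset {ι : Type*} {r : ℝ} :
    cubeBoundary ι r ⊆ Set.Icc 0 (fun _ => r) := fun _ h => h.1

theorem inv_smul_mem_cubeBoundary {ι : Type*} {r : ℝ} (hr : 0 < r) {x : ι → ℝ}
    (hx : x ∈ cubeBoundary ι r) : r⁻¹ • x ∈ cubeBoundary ι 1 := by
  obtain ⟨hx, i, hi⟩ := hx
  refine ⟨⟨fun j => ?_, fun j => ?_⟩, i, ?_⟩
  · exact mul_nonneg (inv_nonneg.2 hr.le) (hx.1 j)
  · exact (inv_mul_le_one₀ hr).2 (hx.2 j)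
  · rcases hi with hi | hi <;> simp [hi, hr.ne']

theorem frontier_cube {ι : Type*} [Finite ι] (r : ℝ) :
    frontier (Set.Icc 0 (fun _ : ι => r)) = cubeBoundary ι r := by
  have hint : interior (Set.Icc 0 (fun _ : ι => r)) = {x | ∀ i, 0 < x i ∧ x i < r} := by
    rw [← Set.pi_univ_Icc, interior_pi_set Set.finite_univ]
    ext x
    simp [Set.mem_pi]
  rw [frontier, isClosed_Icc.closure_eq, hint]
  ext x
  simp only [cubeBoundary, Set.mem_sdiff, Set.mem_ofPred_eq, not_forall, not_and_or, not_lt]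
  refine and_congr_right fun hx => exists_congr fun i => ?_
  have h0 : 0 ≤ x i := hx.1 i
  have h1 : x i ≤ r := hx.2 i
  exact or_congr ⟨fun h => le_antisymm h h0, fun h => h.le⟩
    ⟨fun h => le_antisymm h1 h, fun h => h.ge⟩

theorem exists_homeomorph_cube_ball (ι : Type*) [Fintype ι] {d : ℕ} (hd : Fintype.card ι = d)
    {r : ℝ} (hr : 0 < r) :
    ∃ h : (ι → ℝ) ≃ₜ EuclideanSpace ℝ (Fin d), ∀ x,
      (h x ∈ Metric.closedBall 0 1 ↔ x ∈ Set.Icc 0 (fun _ : ι => r)) ∧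
      (h x ∈ Metric.sphere 0 1 ↔ x ∈ cubeBoundary ι r) := by
  let e : (ι → ℝ) ≃L[ℝ] EuclideanSpace ℝ (Fin d) :=
    (ContinuousLinearEquiv.piCongrLeft ℝ (fun _ : Fin d => ℝ)
      (Fintype.equivFinOfCardEq hd)).trans (EuclideanSpace.equiv (Fin d) ℝ).symm
  let Q : Set (ι → ℝ) := Set.Icc 0 (fun _ : ι => r)
  have hQ : IsCompact Q := isCompact_Icc
  have hint : (interior Q).Nonempty := by
    refine ⟨fun _ => r / 2, ?_⟩
    rw [show Q = Set.univ.pi fun _ => Set.Icc 0 r from (Set.pi_univ_Icc _ _).symm,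
      interior_pi_set Set.finite_univ]
    simp [Set.mem_pi, hr]
  have himage : e.toHomeomorph '' Q = e '' Q := rfl
  obtain ⟨h, -, hcl, hfr⟩ := exists_homeomorph_image_interior_closure_frontier_eq_unitBall
    (s := e.toHomeomorph '' Q)
    (by rw [himage]; exact (convex_Icc _ _).linear_image e.toLinearMap)
    (by rw [← e.toHomeomorph.image_interior]; exact hint.image _)
    (hQ.image e.continuous).isBounded
  rw [← e.toHomeomorph.image_closure, hQ.isClosed.closure_eq] at hcl
  rw [← e.toHomeomorph.image_frontier, frontier_cube] at hfr
  refine ⟨e.toHomeomorph.trans h, fun x => ⟨?_, ?_⟩⟩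
  · rw [← hcl, Homeomorph.trans_apply, h.injective.mem_set_image,
      e.toHomeomorph.injective.mem_set_image]
  · rw [← hfr, Homeomorph.trans_apply, h.injective.mem_set_image,
      e.toHomeomorph.injective.mem_set_image]

section Cube

variable {ι Y : Type*} [Fintype ι] [TopologicalSpace Y] {C : Set Y}

theorem SphereExtends.exists_cube_extension {d : ℕ} (hC : SphereExtends d C)
    (hd : Fintype.card ι = d) {r : ℝ} (hr : 0 < r) {F : (ι → ℝ) → Y}
    (hF : ContinuousOn F (cubeBoundary ι r)) (hFC : Set.MapsTo F (cubeBoundary ι r) C) :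
    ∃ G : (ι → ℝ) → Y, ContinuousOn G (Set.Icc 0 (fun _ => r)) ∧
      Set.MapsTo G (Set.Icc 0 (fun _ => r)) C ∧ Set.EqOn G F (cubeBoundary ι r) := by
  obtain ⟨h, hh⟩ := exists_homeomorph_cube_ball ι hd hr
  have hsymm : Set.MapsTo h.symm (Metric.sphere 0 1) (cubeBoundary ι r) := fun y hy => by
    rw [← (hh _).2]; simpa using hy
  obtain ⟨g, hg, hgC, hgf⟩ := hC (F ∘ h.symm) (hF.comp h.symm.continuous.continuousOn hsymm)
    (hFC.comp hsymm)
  have hmaps : Set.MapsTo h (Set.Icc 0 (fun _ => r)) (Metric.closedBall 0 1) :=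
    fun x hx => (hh x).1.2 hx
  refine ⟨g ∘ h, hg.comp h.continuous.continuousOn hmaps, hgC.comp hmaps, fun x hx => ?_⟩
  simp [hgf ((hh x).2.2 hx)]

theorem sphereExtends_of_exists_cube_extension {d : ℕ} (hd : Fintype.card ι = d)
    {r : ℝ} (hr : 0 < r)
    (H : ∀ F : (ι → ℝ) → Y, ContinuousOn F (cubeBoundary ι r) →
      Set.MapsTo F (cubeBoundary ι r) C →
      ∃ G : (ι → ℝ) → Y, ContinuousOn G (Set.Icc 0 (fun _ => r)) ∧
        Set.MapsTo G (Set.Icc 0 (fun _ => r)) C ∧ Set.EqOn G F (cubeBoundary ι r)) :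
    SphereExtends d C := by
  intro f hf hfC
  obtain ⟨h, hh⟩ := exists_homeomorph_cube_ball ι hd hr
  have hbd : Set.MapsTo h (cubeBoundary ι r) (Metric.sphere 0 1) := fun x hx => (hh x).2.2 hx
  have hsymm {y} : (y ∈ Metric.closedBall 0 1 ↔ h.symm y ∈ Set.Icc 0 (fun _ : ι => r)) ∧
      (y ∈ Metric.sphere 0 1 ↔ h.symm y ∈ cubeBoundary ι r) := by
    simpa using hh (h.symm y)
  obtain ⟨G, hG, hGC, hGF⟩ := H (f ∘ h) (hf.comp h.continuous.continuousOn hbd) (hfC.comp hbd)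
  refine ⟨G ∘ h.symm, hG.comp h.symm.continuous.continuousOn fun y hy => hsymm.1.1 hy,
    fun y hy => hGC (hsymm.1.1 hy), fun y hy => ?_⟩
  simp [hGF (hsymm.2.1 hy)]

end Cube

section Grid

variable {ι Y : Type*}

open scoped Classical in
/-- The face of the integer grid with lowest corner `a` and directions `s`. -/
def gridFace (a : ι → ℤ) (s : Finset ι) : Set (ι → ℝ) :=
  {x | ∀ i, (a i : ℝ) ≤ x i ∧ x i ≤ a i + if i ∈ s then 1 else 0}

/-- The relative boundary of a grid face. -/
def gridFaceBoundary (a : ι → ℤ) (s : Finset ι) : Set (ι → ℝ) :=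
  {x | x ∈ gridFace a s ∧ ∃ i ∈ s, x i = a i ∨ x i = a i + 1}

theorem isClosed_gridFace (a : ι → ℤ) (s : Finset ι) : IsClosed (gridFace a s) := by
  simp only [gridFace, Set.ofPred_forall, Set.ofPred_and]
  exact isClosed_iInter fun i => (isClosed_le continuous_const (continuous_apply i)).inter
    (isClosed_le (continuous_apply i) continuous_const)

theorem eq_of_mem_gridFace {a : ι → ℤ} {s : Finset ι} {x : ι → ℝ} (hx : x ∈ gridFace a s) {i : ι}
    (hi : i ∉ s) : x i = a i := by
  have := hx i
  simp only [hi, if_false, add_zero] at this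
  exact le_antisymm this.2 this.1

theorem mem_Icc_of_mem_gridFace {a : ι → ℤ} {s : Finset ι} {x : ι → ℝ} (hx : x ∈ gridFace a s)
    (i : ι) : (a i : ℝ) ≤ x i ∧ x i ≤ a i + 1 := by
  have := hx i
  split_ifs at this <;> constructor <;> linarith [this.1, this.2]

theorem mem_Ioo_of_mem_gridFace {a : ι → ℤ} {s : Finset ι} {x : ι → ℝ} (hx : x ∈ gridFace a s)
    (hx' : x ∉ gridFaceBoundary a s) {i : ι} (hi : i ∈ s) : (a i : ℝ) < x i ∧ x i < a i + 1 := by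
  have h := mem_Icc_of_mem_gridFace hx i
  have h' : ¬(x i = a i ∨ x i = a i + 1) := fun h => hx' ⟨hx, i, hi, h⟩
  rw [not_or] at h'
  exact ⟨lt_of_le_of_ne h.1 (Ne.symm h'.1), lt_of_le_of_ne h.2 h'.2⟩

theorem corner_mem_gridFace (a : ι → ℤ) (s : Finset ι) : (fun i => (a i : ℝ)) ∈ gridFace a s :=
  fun i => ⟨le_rfl, by split_ifs <;> simp⟩

theorem int_eq_of_mem_Ioo {a b : ℤ} {t : ℝ} (h₁ : (a : ℝ) < t) (h₂ : t < a + 1) (h₃ : (b : ℝ) ≤ t)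
    (h₄ : t ≤ b + 1) : a = b := by
  have h5 : (b : ℝ) < a + 1 := by linarith
  have h6 : (a : ℝ) < b + 1 := by linarith
  norm_cast at h5 h6
  omega

theorem SphereExtends.exists_gridFace_extension [TopologicalSpace Y] {a : ι → ℤ} {s : Finset ι}
    {C : Set Y}
    (hC : SphereExtends s.card C) {F : (ι → ℝ) → Y} (hF : ContinuousOn F (gridFaceBoundary a s))
    (hFC : Set.MapsTo F (gridFaceBoundary a s) C) :
    ∃ G : (ι → ℝ) → Y, ContinuousOn G (gridFace a s) ∧ Set.MapsTo G (gridFace a s) C ∧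
      Set.EqOn G F (gridFaceBoundary a s) := by
  classical
  let p : (s → ℝ) → ι → ℝ := fun y i => if h : i ∈ s then a i + y ⟨i, h⟩ else a i
  let q : (ι → ℝ) → s → ℝ := fun x i => x i - a i
  have hp : Continuous p := by
    refine continuous_pi fun i => ?_
    by_cases h : i ∈ s <;> simp only [p, h, dite_true, dite_false] <;> fun_prop
  have hq : Continuous q := by fun_prop
  have hpq : ∀ x ∈ gridFace a s, p (q x) = x := fun x hx => by
    funext i
    by_cases h : i ∈ s
    · simp [p, q, h]
    · simp [p, h, eq_of_mem_gridFace hx h]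
  have hpb : Set.MapsTo p (cubeBoundary s 1) (gridFaceBoundary a s) := by
    rintro y ⟨hy, i, hi⟩
    refine ⟨fun j => ?_, i, i.2, ?_⟩
    · by_cases h : j ∈ s
      · have h0 : 0 ≤ y ⟨j, h⟩ := hy.1 _
        have h1 : y ⟨j, h⟩ ≤ 1 := hy.2 _
        simp only [p, h, dite_true, if_true]
        constructor <;> linarith
      · simp [p, h]
    · rcases hi with hi | hi <;> simp [p, hi]
  have hqQ : Set.MapsTo q (gridFace a s) (Set.Icc 0 fun _ => 1) := fun x hx =>
    ⟨fun i => by simpa [q] using (mem_Icc_of_mem_gridFace hx i).1,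
      fun i => by simpa [q, add_comm] using (mem_Icc_of_mem_gridFace hx i).2⟩
  have hqb : Set.MapsTo q (gridFaceBoundary a s) (cubeBoundary s 1) := by
    rintro x ⟨hx, i, hi, hxi⟩
    refine ⟨hqQ hx, ⟨i, hi⟩, ?_⟩
    rcases hxi with h | h <;> simp [q, h]
  obtain ⟨G, hG, hGC, hGF⟩ := hC.exists_cube_extension (Fintype.card_coe s) one_pos
    (hF.comp hp.continuousOn hpb) (hFC.comp hpb)
  refine ⟨G ∘ q, hG.comp hq.continuousOn hqQ, hGC.comp hqQ, fun x hx => ?_⟩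
  simp [hGF (hqb hx), hpq x hx.1]

theorem gridFace_subset_cubeBoundary_or {N : ℕ} {a : ι → ℤ} {s : Finset ι}
    (hN : gridFace a s ⊆ Set.Icc (0 : ι → ℝ) fun _ => (N : ℝ)) :
    gridFace a s ⊆ cubeBoundary ι N ∨
      gridFace a s ∩ cubeBoundary ι N ⊆ gridFaceBoundary a s := by
  classical
  by_contra! h
  obtain ⟨h1, h2⟩ := h
  obtain ⟨x, ⟨hx, -, i, hi⟩, hx'⟩ := Set.not_subset.1 h2
  refine h1 fun y hy => ⟨hN hy, i, ?_⟩
  by_cases his : i ∈ s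
  · exfalso
    have h3 := mem_Ioo_of_mem_gridFace hx hx' his
    have h4 : (0 : ℝ) ≤ a i := (hN (corner_mem_gridFace a s)).1 i
    have h5 : (a i : ℝ) + 1 ≤ N := by
      have : (fun j => (a j : ℝ) + if j ∈ s then 1 else 0) ∈ gridFace a s := fun j =>
        ⟨by dsimp only; split_ifs <;> simp, by dsimp only; split_ifs <;> simp⟩
      simpa [his] using (hN this).2 i
    rcases hi with hi | hi <;> linarith
  · rwa [eq_of_mem_gridFace hy his, ← eq_of_mem_gridFace hx his]

variable [Fintype ι]

theorem mem_gridFace_univ {a : ι → ℤ} {x : ι → ℝ} :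
    x ∈ gridFace a Finset.univ ↔ ∀ i, (a i : ℝ) ≤ x i ∧ x i ≤ a i + 1 := by
  simp [gridFace]

theorem gridFace_subset_of_mem_cell {a b : ι → ℤ} {s : Finset ι} {x : ι → ℝ}
    (hx : x ∈ gridFace a s) (hx' : x ∉ gridFaceBoundary a s) (hb : x ∈ gridFace b Finset.univ) :
    gridFace a s ⊆ gridFace b Finset.univ := by
  intro y hy
  rw [mem_gridFace_univ] at hb ⊢
  intro i
  by_cases hi : i ∈ s
  · have h := mem_Ioo_of_mem_gridFace hx hx' hi
    rw [← int_eq_of_mem_Ioo h.1 h.2 (hb i).1 (hb i).2]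
    exact mem_Icc_of_mem_gridFace hy i
  · rw [eq_of_mem_gridFace hy hi, ← eq_of_mem_gridFace hx hi]
    exact hb i

theorem eq_of_cell_subset_cell {a b : ι → ℤ}
    (h : gridFace a Finset.univ ⊆ gridFace b Finset.univ) : a = b := by
  have h0 := mem_gridFace_univ.1 (h (a := fun i => (a i : ℝ) + 1 / 2)
    (mem_gridFace_univ.2 fun _ => by constructor <;> linarith))
  funext i
  exact int_eq_of_mem_Ioo (by linarith) (by linarith) (h0 i).1 (h0 i).2

theorem mem_cell_floor (x : ι → ℝ) : x ∈ gridFace (fun i => ⌊x i⌋) Finset.univ :=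
  mem_gridFace_univ.2 fun _ => ⟨Int.floor_le _, (Int.lt_floor_add_one _).le⟩

variable [TopologicalSpace Y]

/-- `F` is continuous on the closed set `E` and sends the points of each grid cell `b` lying in `E`
into `τ b`. -/
structure IsCarriedOn (τ : (ι → ℤ) → Set Y) (E : Set (ι → ℝ)) (F : (ι → ℝ) → Y) : Prop where
  isClosed : IsClosed E
  continuousOn : ContinuousOn F E
  mem : ∀ x ∈ E, ∀ b, x ∈ gridFace b Finset.univ → F x ∈ τ b

/-- The intersection of the carriers of the cells containing a given grid face. -/
def faceCarrier (τ : (ι → ℤ) → Set Y) (a : ι → ℤ) (s : Finset ι) : Set Y :=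
  {y | ∀ b, gridFace a s ⊆ gridFace b Finset.univ → y ∈ τ b}

theorem IsCarriedOn.exists_union_gridFace {τ : (ι → ℤ) → Set Y} {E : Set (ι → ℝ)}
    {F : (ι → ℝ) → Y} (h : IsCarriedOn τ E F) {a : ι → ℤ} {s : Finset ι}
    (hC : SphereExtends s.card (faceCarrier τ a s)) (hb : gridFaceBoundary a s ⊆ E)
    (hE : gridFace a s ∩ E ⊆ gridFaceBoundary a s) :
    ∃ F', IsCarriedOn τ (E ∪ gridFace a s) F' ∧ Set.EqOn F' F E := by
  classical
  obtain ⟨G, hG, hGC, hGF⟩ := hC.exists_gridFace_extension (h.continuousOn.mono hb)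
    fun x hx b hxb => h.mem x (hb hx) b (hxb hx.1)
  let F' : (ι → ℝ) → Y := fun x => if x ∈ E then F x else G x
  have hF'E : Set.EqOn F' F E := fun x hx => if_pos hx
  have hF'G : Set.EqOn F' G (gridFace a s) := fun x hx => by
    by_cases hxE : x ∈ E
    · rw [hF'E hxE, hGF (hE ⟨hx, hxE⟩)]
    · exact if_neg hxE
  refine ⟨F', ⟨h.isClosed.union (isClosed_gridFace a s),
    (h.continuousOn.congr hF'E).union_of_isClosed (hG.congr hF'G) h.isClosed
      (isClosed_gridFace a s), fun x hx b hxb => ?_⟩, hF'E⟩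
  by_cases hxE : x ∈ E
  · rw [hF'E hxE]
    exact h.mem x hxE b hxb
  · have hx := hx.resolve_left hxE
    rw [hF'G hx]
    exact hGC hx b (gridFace_subset_of_mem_cell hx (fun h => hxE (hb h)) hxb)

open scoped Classical in
/-- The coordinates at which a point is not an integer. -/
noncomputable def nonintCoords (x : ι → ℝ) : Finset ι :=
  Finset.univ.filter fun i => x i ≠ ⌊x i⌋

theorem nonintCoords_subset {a : ι → ℤ} {s : Finset ι} {x : ι → ℝ} (hx : x ∈ gridFace a s) :
    nonintCoords x ⊆ s := by
  intro i hi
  by_contra h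
  simp [nonintCoords, eq_of_mem_gridFace hx h] at hi

theorem nonintCoords_eq {a : ι → ℤ} {s : Finset ι} {x : ι → ℝ} (hx : x ∈ gridFace a s)
    (hx' : x ∉ gridFaceBoundary a s) : nonintCoords x = s := by
  refine (nonintCoords_subset hx).antisymm fun i hi => ?_
  have h := mem_Ioo_of_mem_gridFace hx hx' hi
  simp only [nonintCoords, Finset.mem_filter, Finset.mem_univ, true_and]
  intro h'
  have h1 : ⌊x i⌋ = a i := Int.floor_eq_iff.2 ⟨h.1.le, h.2⟩
  rw [h1] at h'
  exact h.1.ne' h'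

theorem card_nonintCoords_lt {a : ι → ℤ} {s : Finset ι} {x : ι → ℝ}
    (hx : x ∈ gridFaceBoundary a s) : (nonintCoords x).card < s.card := by
  obtain ⟨hx, i, hi, hxi⟩ := hx
  refine Finset.card_lt_card ((nonintCoords_subset hx).ssubset_of_mem_notMem hi ?_)
  rcases hxi with h | h <;> simp [nonintCoords, h]

theorem mem_gridFace_nonintCoords (x : ι → ℝ) :
    x ∈ gridFace (fun i => ⌊x i⌋) (nonintCoords x) := by
  intro i
  refine ⟨Int.floor_le _, ?_⟩
  split_ifs with h
  · exact (Int.lt_floor_add_one _).le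
  · simp only [nonintCoords, Finset.mem_filter, Finset.mem_univ, true_and, not_not] at h
    simp [← h]

theorem gridFace_nonintCoords_subset {N : ℕ} {x : ι → ℝ}
    (hx : x ∈ Set.Icc (0 : ι → ℝ) fun _ => (N : ℝ)) :
    gridFace (fun i => ⌊x i⌋) (nonintCoords x) ⊆ Set.Icc (0 : ι → ℝ) fun _ => (N : ℝ) := by
  intro y hy
  refine ⟨fun i => ?_, fun i => ?_⟩
  · have h0 : (0 : ℝ) ≤ x i := hx.1 i
    have h1 : (0 : ℝ) ≤ ⌊x i⌋ := by exact_mod_cast Int.floor_nonneg.2 h0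
    exact h1.trans (hy i).1
  · have h0 : x i ≤ (N : ℝ) := hx.2 i
    refine (hy i).2.trans ?_
    split_ifs with h
    · simp only [nonintCoords, Finset.mem_filter, Finset.mem_univ, true_and] at h
      have h1 : (⌊x i⌋ : ℝ) < N := lt_of_lt_of_le (lt_of_le_of_ne (Int.floor_le _) h.symm) h0
      have h2 : ⌊x i⌋ < (N : ℤ) := by exact_mod_cast h1
      have h3 : (⌊x i⌋ : ℝ) + 1 ≤ N := by exact_mod_cast h2
      exact h3
    · simpa using (Int.floor_le (x i)).trans h0

theorem gridFace_eq_of_mem {a a' : ι → ℤ} {s s' : Finset ι} (hs : s.card = s'.card) {x : ι → ℝ}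
    (hx : x ∈ gridFace a s) (hx' : x ∉ gridFaceBoundary a s) (hxs : x ∈ gridFace a' s') :
    a = a' ∧ s = s' := by
  have hss : s = s' :=
    Finset.eq_of_subset_of_card_le (nonintCoords_eq hx hx' ▸ nonintCoords_subset hxs) hs.ge
  subst hss
  refine ⟨funext fun i => ?_, rfl⟩
  by_cases hi : i ∈ s
  · have h := mem_Ioo_of_mem_gridFace hx hx' hi
    have h' := mem_Icc_of_mem_gridFace hxs i
    exact int_eq_of_mem_Ioo h.1 h.2 h'.1 h'.2
  · have h := eq_of_mem_gridFace hx hi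
    rw [eq_of_mem_gridFace hxs hi] at h
    exact_mod_cast h.symm

theorem exists_finset_gridFaces (ι : Type*) [Fintype ι] (N d : ℕ) :
    ∃ T : Finset ((ι → ℤ) × Finset ι), ∀ q, q ∈ T ↔ q.2.card = d ∧
      gridFace q.1 q.2 ⊆ Set.Icc (0 : ι → ℝ) fun _ => (N : ℝ) := by
  classical
  have hfin : {q : (ι → ℤ) × Finset ι | q.2.card = d ∧
      gridFace q.1 q.2 ⊆ Set.Icc (0 : ι → ℝ) fun _ => (N : ℝ)}.Finite := by
    refine ((Set.finite_Icc (0 : ι → ℤ) fun _ => (N : ℤ)).prod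
      (Set.finite_univ (α := Finset ι))).subset fun q hq => ⟨⟨fun i => ?_, fun i => ?_⟩, trivial⟩
    · have : (0 : ℝ) ≤ q.1 i := (hq.2 (corner_mem_gridFace _ _)).1 i
      exact_mod_cast this
    · have : (q.1 i : ℝ) ≤ N := (hq.2 (corner_mem_gridFace _ _)).2 i
      exact_mod_cast this
  exact ⟨hfin.toFinset, fun q => hfin.mem_toFinset⟩

/-- The part of the cube `[0, N]^ι` made of its boundary and of the grid faces of dimension less
than `d`. -/
def gridSkeleton (ι : Type*) [Fintype ι] (N d : ℕ) : Set (ι → ℝ) :=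
  cubeBoundary ι N ∪
    {x | x ∈ Set.Icc (0 : ι → ℝ) (fun _ => (N : ℝ)) ∧ (nonintCoords x).card < d}

theorem gridSkeleton_succ {N d : ℕ} {T : Finset ((ι → ℤ) × Finset ι)}
    (hT : ∀ q, q ∈ T ↔ q.2.card = d ∧
      gridFace q.1 q.2 ⊆ Set.Icc (0 : ι → ℝ) fun _ => (N : ℝ)) :
    gridSkeleton ι N (d + 1) = gridSkeleton ι N d ∪ ⋃ q ∈ T, gridFace q.1 q.2 := by
  ext x
  simp only [gridSkeleton, Set.mem_union, Set.mem_ofPred_eq, Set.mem_iUnion, hT]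
  constructor
  · rintro (h | ⟨h, hd⟩)
    · exact Or.inl (Or.inl h)
    · rcases Nat.lt_succ_iff_lt_or_eq.1 hd with hd | hd
      · exact Or.inl (Or.inr ⟨h, hd⟩)
      · exact Or.inr ⟨(_, nonintCoords x), ⟨hd, gridFace_nonintCoords_subset h⟩,
          mem_gridFace_nonintCoords x⟩
  · rintro ((h | ⟨h, hd⟩) | ⟨q, ⟨hq, hqN⟩, hx⟩)
    · exact Or.inl h
    · exact Or.inr ⟨h, hd.trans d.lt_succ_self⟩
    · exact Or.inr ⟨hqN hx, Nat.lt_succ_iff.2 (hq ▸ Finset.card_le_card (nonintCoords_subset hx))⟩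

theorem IsCarriedOn.exists_gridSkeleton_succ {τ : (ι → ℤ) → Set Y} {N d : ℕ} {F : (ι → ℝ) → Y}
    (h : IsCarriedOn τ (gridSkeleton ι N d) F)
    (hC : ∀ a s, SphereExtends s.card (faceCarrier τ a s)) :
    ∃ F', IsCarriedOn τ (gridSkeleton ι N (d + 1)) F' ∧ Set.EqOn F' F (gridSkeleton ι N d) := by
  classical
  obtain ⟨T₀, hT₀⟩ := exists_finset_gridFaces ι N d
  rw [gridSkeleton_succ hT₀]
  suffices H : ∀ T ⊆ T₀, ∃ F', IsCarriedOn τ (gridSkeleton ι N d ∪ ⋃ q ∈ T, gridFace q.1 q.2) F' ∧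
      Set.EqOn F' F (gridSkeleton ι N d) from H T₀ subset_rfl
  intro T
  induction T using Finset.induction_on with
  | empty => exact fun _ => ⟨F, by simpa using h, fun _ _ => rfl⟩
  | insert q T hqT ih =>
    intro hT
    obtain ⟨F', hF', hF'F⟩ := ih ((Finset.subset_insert q T).trans hT)
    obtain ⟨hqd, hqN⟩ := (hT₀ q).1 (hT (Finset.mem_insert_self q T))
    have hunion : (gridSkeleton ι N d ∪ ⋃ q' ∈ insert q T, gridFace q'.1 q'.2) =
        (gridSkeleton ι N d ∪ ⋃ q' ∈ T, gridFace q'.1 q'.2) ∪ gridFace q.1 q.2 := by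
      rw [Finset.set_biUnion_insert, Set.union_assoc, Set.union_comm (gridFace _ _)]
    rw [hunion]
    rcases gridFace_subset_cubeBoundary_or hqN with hsub | hbd
    · have hsub' : gridFace q.1 q.2 ⊆ gridSkeleton ι N d ∪ ⋃ q' ∈ T, gridFace q'.1 q'.2 :=
        fun x hx => Or.inl (Or.inl (hsub hx))
      rw [Set.union_eq_left.2 hsub']
      exact ⟨F', hF', hF'F⟩
    · obtain ⟨F'', hF'', hF''F'⟩ := hF'.exists_union_gridFace (hC q.1 q.2)
        (fun x hx => Or.inl (Or.inr ⟨hqN hx.1, hqd ▸ card_nonintCoords_lt hx⟩)) (by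
          rintro x ⟨hx, hxE⟩
          by_contra hx'
          rcases hxE with (hxb | ⟨-, hxd⟩) | hxT
          · exact hx' (hbd ⟨hx, hxb⟩)
          · rw [nonintCoords_eq hx hx', hqd] at hxd
            exact hxd.false
          · simp only [Set.mem_iUnion] at hxT
            obtain ⟨q', hq', hxq'⟩ := hxT
            have hq'd := ((hT₀ q').1 (hT (Finset.mem_insert_of_mem hq'))).1
            obtain ⟨h1, h2⟩ := gridFace_eq_of_mem (hqd.trans hq'd.symm) hx hx' hxq'
            exact hqT (Prod.ext h1 h2 ▸ hq'))
      exact ⟨F'', hF'', fun x hx => (hF''F' (Or.inl hx)).trans (hF'F hx)⟩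

theorem isClosed_cubeBoundary (r : ℝ) : IsClosed (cubeBoundary ι r) :=
  frontier_cube (ι := ι) r ▸ isClosed_frontier

/-- A map on the boundary of a cube extends to the cube within prescribed carriers of the grid
cells, provided the carriers of all faces are sufficiently connected. -/
theorem IsCarriedOn.exists_cube_extension {τ : (ι → ℤ) → Set Y} {N : ℕ} {F : (ι → ℝ) → Y}
    (h : IsCarriedOn τ (cubeBoundary ι N) F)
    (hC : ∀ a s, SphereExtends s.card (faceCarrier τ a s)) :
    ∃ F', IsCarriedOn τ (Set.Icc (0 : ι → ℝ) fun _ => (N : ℝ)) F' ∧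
      Set.EqOn F' F (cubeBoundary ι N) := by
  have H : ∀ d, ∃ F', IsCarriedOn τ (gridSkeleton ι N d) F' ∧
      Set.EqOn F' F (cubeBoundary ι N) := by
    intro d
    induction d with
    | zero => exact ⟨F, by simpa [gridSkeleton] using h, fun _ _ => rfl⟩
    | succ d ih =>
      obtain ⟨F', hF', hF'F⟩ := ih
      obtain ⟨F'', hF'', hF''F'⟩ := hF'.exists_gridSkeleton_succ hC
      exact ⟨F'', hF'', fun x hx => (hF''F' (Or.inl hx)).trans (hF'F hx)⟩
  have hskel : gridSkeleton ι N (Fintype.card ι + 1) = Set.Icc (0 : ι → ℝ) fun _ => (N : ℝ) :=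
    Set.Subset.antisymm (Set.union_subset cubeBoundary_subset fun _ hx => hx.1)
      fun x hx => Or.inr ⟨hx, Nat.lt_succ_iff.2 (Finset.card_le_univ _)⟩
  exact hskel ▸ H (Fintype.card ι + 1)

end Grid

section Gluing

open Metric

/-- `C` is `(m - 2)`-connected: it has the extension property for all spheres of dimension less
than `m - 1`. -/
def ExtendsBelow {Y : Type*} [TopologicalSpace Y] (m : ℕ) (C : Set Y) : Prop :=
  ∀ d < m, SphereExtends d C

theorem gridFace_subset_cell {ι : Type*} [Fintype ι] (a : ι → ℤ) (s : Finset ι) :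
    gridFace a s ⊆ gridFace a Finset.univ := fun _ hx =>
  mem_gridFace_univ.2 (mem_Icc_of_mem_gridFace hx)

theorem sphereExtends_faceCarrier {ι Y : Type*} [Fintype ι] [TopologicalSpace Y] {A B : Set Y}
    (hA : ExtendsBelow (Fintype.card ι + 1) A) (hB : ExtendsBelow (Fintype.card ι + 1) B)
    (hAB : ExtendsBelow (Fintype.card ι) (A ∩ B)) {τ : (ι → ℤ) → Set Y}
    (hτ : ∀ b, τ b = A ∨ τ b = B) (a : ι → ℤ) (s : Finset ι) :
    SphereExtends s.card (faceCarrier τ a s) := by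
  have hs : s.card < Fintype.card ι + 1 := Nat.lt_succ_iff.2 (Finset.card_le_univ s)
  by_cases h : ∀ b, gridFace a s ⊆ gridFace b Finset.univ → τ b = τ a
  · have : faceCarrier τ a s = τ a := Set.Subset.antisymm
      (fun y hy => hy a (gridFace_subset_cell a s)) fun y hy b hb => h b hb ▸ hy
    rw [this]
    rcases hτ a with h | h <;> rw [h]
    exacts [hA _ hs, hB _ hs]
  · push Not at h
    obtain ⟨b, hb, hba⟩ := h
    have hAB' : faceCarrier τ a s = A ∩ B := by
      refine Set.Subset.antisymm (fun y hy => ?_) fun y hy c _ => ?_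
      · have h1 := hy a (gridFace_subset_cell a s)
        have h2 := hy b hb
        rcases hτ a with ha | ha <;> rcases hτ b with hb' | hb' <;> rw [ha] at h1 hba <;>
          rw [hb'] at h2 hba
        exacts [(hba rfl).elim, ⟨h1, h2⟩, ⟨h2, h1⟩, (hba rfl).elim]
      · rcases hτ c with h | h <;> rw [h]
        exacts [hy.1, hy.2]
    rw [hAB']
    refine hAB _ (lt_of_le_of_ne (Finset.card_le_univ s) fun hcard => hba ?_)
    rw [(Finset.card_eq_iff_eq_univ s).1 hcard] at hb
    rw [eq_of_cell_subset_cell hb]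

/-- A map on the boundary of the unit cube into the union of two open sets can be rescaled so that
it sends the boundary points of each grid cell into one of them. -/
theorem exists_grid_of_isOpen_cover {ι Y : Type*} [Fintype ι] [TopologicalSpace Y]
    {U V : Set Y} (hU : IsOpen U) (hV : IsOpen V) {F : (ι → ℝ) → Y}
    (hF : ContinuousOn F (cubeBoundary ι 1)) (hFUV : Set.MapsTo F (cubeBoundary ι 1) (U ∪ V)) :
    ∃ N : ℕ, 0 < N ∧ ∀ b : ι → ℤ,
      Set.MapsTo (fun x => F ((N : ℝ)⁻¹ • x)) (gridFace b Finset.univ ∩ cubeBoundary ι N) U ∨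
      Set.MapsTo (fun x => F ((N : ℝ)⁻¹ • x)) (gridFace b Finset.univ ∩ cubeBoundary ι N) V := by
  obtain ⟨U', hU', hUU'⟩ := continuousOn_iff'.1 hF U hU
  obtain ⟨V', hV', hVV'⟩ := continuousOn_iff'.1 hF V hV
  have hK : IsCompact (cubeBoundary ι 1) :=
    isCompact_Icc.of_isClosed_subset (isClosed_cubeBoundary 1) cubeBoundary_subset
  obtain ⟨δ, hδ, hδK⟩ := lebesgue_number_lemma_of_metric (c := fun b : Bool => cond b U' V') hK
    (by rintro (_ | _) <;> assumption) (fun x hx => by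
      rcases hFUV hx with h | h
      · exact Set.mem_iUnion.2 ⟨true, (hUU'.subset ⟨h, hx⟩).1⟩
      · exact Set.mem_iUnion.2 ⟨false, (hVV'.subset ⟨h, hx⟩).1⟩)
  obtain ⟨N, hN0, hN⟩ := Real.exists_nat_pos_inv_lt hδ
  have hN0' : (0 : ℝ) < N := Nat.cast_pos.2 hN0
  have hscale : ∀ x ∈ cubeBoundary ι N, (N : ℝ)⁻¹ • x ∈ cubeBoundary ι 1 := fun _ hx =>
    inv_smul_mem_cubeBoundary hN0' hx
  refine ⟨N, hN0, fun b => ?_⟩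
  rcases (gridFace b Finset.univ ∩ cubeBoundary ι N).eq_empty_or_nonempty with he | ⟨x, hxb, hx⟩
  · exact Or.inl (he ▸ Set.mapsTo_empty _ _)
  · obtain ⟨c, hc⟩ := hδK _ (hscale x hx)
    have hball : ∀ y ∈ gridFace b Finset.univ ∩ cubeBoundary ι N,
        (N : ℝ)⁻¹ • y ∈ cond c U' V' := fun y hy => hc (by
      rw [Metric.mem_ball, dist_eq_norm, ← smul_sub, norm_smul, norm_inv, Real.norm_natCast]
      have hxy : ‖y - x‖ ≤ 1 := (pi_norm_le_iff_of_nonneg zero_le_one).2 fun i => by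
        have h1 := mem_gridFace_univ.1 hxb i
        have h2 := mem_gridFace_univ.1 hy.1 i
        rw [Pi.sub_apply, Real.norm_eq_abs, abs_le]
        constructor <;> linarith [h1.1, h1.2, h2.1, h2.2]
      calc (N : ℝ)⁻¹ * ‖y - x‖ ≤ (N : ℝ)⁻¹ * 1 := by gcongr
        _ < δ := by rwa [mul_one])
    cases c
    · exact Or.inr fun y hy => (hVV'.superset ⟨hball y hy, hscale y hy.2⟩).1
    · exact Or.inl fun y hy => (hUU'.superset ⟨hball y hy, hscale y hy.2⟩).1

theorem SphereExtends.of_isOpen_cover {Y : Type*} [TopologicalSpace Y] {X U V : Set Y} {d : ℕ}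
    (hU : IsOpen U) (hV : IsOpen V) (hX : X ⊆ U ∪ V) (hXU : ExtendsBelow (d + 1) (X ∩ U))
    (hXV : ExtendsBelow (d + 1) (X ∩ V)) (hXUV : ExtendsBelow d ((X ∩ U) ∩ (X ∩ V))) :
    SphereExtends d X := by
  classical
  have hd := Fintype.card_fin d
  refine sphereExtends_of_exists_cube_extension hd one_pos fun F hF hFX => ?_
  obtain ⟨N, hN, hNb⟩ := exists_grid_of_isOpen_cover hU hV hF (hFX.mono_right hX)
  have hN' : (0 : ℝ) < N := Nat.cast_pos.2 hN
  have hscale : Set.MapsTo (fun x : Fin d → ℝ => (N : ℝ)⁻¹ • x) (cubeBoundary (Fin d) N)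
      (cubeBoundary (Fin d) 1) := fun _ hx => inv_smul_mem_cubeBoundary hN' hx
  let F₁ : (Fin d → ℝ) → Y := fun x => F ((N : ℝ)⁻¹ • x)
  let τ : (Fin d → ℤ) → Set Y := fun b =>
    if Set.MapsTo F₁ (gridFace b Finset.univ ∩ cubeBoundary (Fin d) N) U then X ∩ U else X ∩ V
  have hτ : ∀ b, τ b = X ∩ U ∨ τ b = X ∩ V := fun b => by
    by_cases h : Set.MapsTo F₁ (gridFace b Finset.univ ∩ cubeBoundary (Fin d) N) U <;>
      simp [τ, h]
  have hF₁ : IsCarriedOn τ (cubeBoundary (Fin d) N) F₁ := by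
    refine ⟨isClosed_cubeBoundary _, hF.comp (continuous_const_smul _).continuousOn hscale,
      fun x hx b hxb => ?_⟩
    by_cases h : Set.MapsTo F₁ (gridFace b Finset.univ ∩ cubeBoundary (Fin d) N) U
    · simp only [τ, h, if_true]
      exact ⟨hFX (hscale hx), h ⟨hxb, hx⟩⟩
    · simp only [τ, h, if_false]
      exact ⟨hFX (hscale hx), (hNb b).resolve_left h ⟨hxb, hx⟩⟩
  obtain ⟨G, hG, hGF⟩ := hF₁.exists_cube_extension
    (sphereExtends_faceCarrier (hd.symm ▸ hXU) (hd.symm ▸ hXV) (hd.symm ▸ hXUV) hτ)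
  have hscale' : Set.MapsTo (fun x : Fin d → ℝ => (N : ℝ) • x) (Set.Icc 0 fun _ => 1)
      (Set.Icc 0 fun _ => (N : ℝ)) := fun x hx =>
    ⟨fun j => mul_nonneg hN'.le (hx.1 j), fun j => mul_le_of_le_one_right hN'.le (hx.2 j)⟩
  refine ⟨fun x => G ((N : ℝ) • x),
    hG.continuousOn.comp (continuous_const_smul _).continuousOn hscale', fun x hx => ?_,
    fun x hx => ?_⟩
  · have h := hG.mem _ (hscale' hx) _ (mem_cell_floor _)
    rcases hτ fun i => ⌊((N : ℝ) • x) i⌋ with h' | h' <;> rw [h'] at h <;> exact h.1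
  · have hx' : (N : ℝ) • x ∈ cubeBoundary (Fin d) N := by
      obtain ⟨hx, i, hi⟩ := hx
      exact ⟨hscale' hx, i, by rcases hi with hi | hi <;> simp [hi]⟩
    simp only [hGF hx', F₁, inv_smul_smul₀ hN'.ne']

/-- The extension property passes from `A` to `D` along maps `i : A → D` and `r : D → A` such that
`i ∘ r` is homotopic to the identity of `D` by a straight-line homotopy. -/
theorem SphereExtends.of_segment_subset {Y Z : Type*} [TopologicalSpace Z] [AddCommGroup Y]
    [Module ℝ Y] [TopologicalSpace Y] [IsTopologicalAddGroup Y] [ContinuousSMul ℝ Y]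
    {A : Set Z} {D : Set Y} {i : Z → Y} {r : Y → Z} {d : ℕ} (hA : SphereExtends d A)
    (hi : ContinuousOn i A) (hiD : Set.MapsTo i A D) (hr : ContinuousOn r D)
    (hrA : Set.MapsTo r D A) (hseg : ∀ x ∈ D, segment ℝ (i (r x)) x ⊆ D) :
    SphereExtends d D := by
  classical
  intro f hf hfD
  obtain ⟨g, hg, hgA, hgf⟩ := hA (r ∘ f) (hr.comp hf hfD) (hrA.comp hfD)
  let E := EuclideanSpace ℝ (Fin d)
  let B : Set E := closedBall 0 (1 / 2)
  let R : Set E := {x | 1 / 2 ≤ ‖x‖ ∧ ‖x‖ ≤ 1}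
  have hBR : closedBall (0 : E) 1 = B ∪ R := by
    ext x
    simp only [B, R, Set.mem_union, mem_closedBall_zero_iff, Set.mem_ofPred_eq]
    constructor
    · intro h
      exact (le_total ‖x‖ (1 / 2)).imp id fun h' => ⟨h', h⟩
    · rintro (h | h)
      · linarith
      · exact h.2
  have hBc : IsClosed B := isClosed_closedBall
  have hRc : IsClosed R :=
    (isClosed_le continuous_const continuous_norm).inter
      (isClosed_le continuous_norm continuous_const)
  let u : E → E := fun x => ‖x‖⁻¹ • x
  have hR0 : ∀ x ∈ R, ‖x‖ ≠ 0 := fun x hx => by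
    have : 1 / 2 ≤ ‖x‖ := hx.1
    linarith
  have hu : ContinuousOn u R :=
    (continuous_norm.continuousOn.inv₀ hR0).smul continuousOn_id
  have huS : Set.MapsTo u R (sphere 0 1) := fun x hx => by
    simp [u, norm_smul, hR0 x hx]
  have h2B : Set.MapsTo (fun x : E => (2 : ℝ) • x) B (closedBall 0 1) := fun x hx => by
    simp only [B, mem_closedBall_zero_iff] at hx
    rw [mem_closedBall_zero_iff, norm_smul, Real.norm_ofNat]
    linarith
  let G₁ : E → Y := fun x => i (g ((2 : ℝ) • x))
  let G₂ : E → Y := fun x =>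
    (2 - 2 * ‖x‖) • i (r (f (u x))) + (2 * ‖x‖ - 1) • f (u x)
  have hG₁ : ContinuousOn G₁ B :=
    (hi.comp hg hgA).comp (continuous_const_smul _).continuousOn h2B
  have hfu : ContinuousOn (fun x => f (u x)) R := hf.comp hu huS
  have hG₂ : ContinuousOn G₂ R := by
    refine ContinuousOn.add (ContinuousOn.smul (by fun_prop) ?_)
      (ContinuousOn.smul (by fun_prop) hfu)
    exact (hi.comp hr hrA).comp hfu (hfD.comp huS)
  let G : E → Y := fun x => if x ∈ B then G₁ x else G₂ x
  have hGB : Set.EqOn G G₁ B := fun x hx => if_pos hx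
  have hGR : Set.EqOn G G₂ R := fun x hx => by
    by_cases hxB : x ∈ B
    · have hx2 : ‖x‖ = 1 / 2 := le_antisymm (mem_closedBall_zero_iff.1 hxB) hx.1
      have hux : u x = (2 : ℝ) • x := by simp [u, hx2]
      rw [hGB hxB]
      have h1 := hgf (huS hx)
      rw [hux] at h1
      simp only [G₁, G₂, hux, h1, hx2, Function.comp_apply]
      norm_num
    · exact if_neg hxB
  refine ⟨G, ?_, fun x hx => ?_, fun x hx => ?_⟩
  · rw [hBR]
    exact (hG₁.congr hGB).union_of_isClosed (hG₂.congr hGR) hBc hRc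
  · rw [hBR] at hx
    rcases hx with hx | hx
    · rw [hGB hx]
      exact hiD (hgA (h2B hx))
    · rw [hGR hx]
      refine hseg _ (hfD (huS hx)) ⟨2 - 2 * ‖x‖, 2 * ‖x‖ - 1, ?_, ?_, by ring, rfl⟩
      · linarith [hx.2]
      · linarith [hx.1]
  · have hx1 : ‖x‖ = 1 := mem_sphere_zero_iff_norm.1 hx
    have hxR : x ∈ R := ⟨by rw [hx1]; norm_num, hx1.le⟩
    rw [hGR hxR]
    simp only [G₂, u, hx1, inv_one, one_smul]
    norm_num

theorem sphereExtends_of_segment_subset {Y : Type*} [AddCommGroup Y]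
    [Module ℝ Y] [TopologicalSpace Y] [IsTopologicalAddGroup Y] [ContinuousSMul ℝ Y]
    {D : Set Y} {p : Y} (hp : p ∈ D) (hD : ∀ x ∈ D, segment ℝ p x ⊆ D) (d : ℕ) :
    SphereExtends d D := by
  have h : SphereExtends d (Set.univ : Set Unit) := fun f _ _ =>
    ⟨f, continuous_of_const (fun _ _ => rfl) |>.continuousOn, fun _ _ => trivial, fun _ _ => rfl⟩
  exact h.of_segment_subset (i := fun _ => p) (r := fun _ => ()) continuousOn_const
    (fun _ _ => hp) continuousOn_const (fun _ _ => trivial) hD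

end Gluing

section IndepRealization

variable {V : Type*} {G : SimpleGraph V} {S : Set V}

open scoped Classical in
/-- The projection of a simplex from the vertex `v` to the opposite facet. -/
noncomputable def eraseVertex (v : V) (x : V → ℝ) : V → ℝ :=
  fun w => if w = v then 0 else x w / (1 - x v)

theorem eraseVertex_self (v : V) (x : V → ℝ) : eraseVertex v x v = 0 := if_pos rfl

theorem eraseVertex_ne_zero {v w : V} {x : V → ℝ} (h : eraseVertex v x w ≠ 0) :
    w ≠ v ∧ x w ≠ 0 := by
  constructor
  · rintro rfl
    exact h (eraseVertex_self _ _)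
  · intro hw
    simp [eraseVertex, hw] at h

theorem continuousOn_eraseVertex (v : V) {D : Set (V → ℝ)} (hD : ∀ x ∈ D, x v < 1) :
    ContinuousOn (eraseVertex v) D := by
  refine continuousOn_pi.2 fun w => ?_
  by_cases h : w = v
  · simpa [eraseVertex, h] using continuousOn_const
  · simp only [eraseVertex, h, if_false]
    refine ContinuousOn.div (by fun_prop) (by fun_prop) fun x hx => ?_
    linarith [hD x hx]

theorem convex_setOf_apply_pos (v : V) : Convex ℝ {x : V → ℝ | 0 < x v} :=
  convex_halfSpace_gt (LinearMap.proj (R := ℝ) (φ := fun _ : V => ℝ) v).isLinear 0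

theorem convex_setOf_apply_lt_one (v : V) : Convex ℝ {x : V → ℝ | x v < 1} :=
  convex_halfSpace_lt (LinearMap.proj (R := ℝ) (φ := fun _ : V => ℝ) v).isLinear 1

theorem eq_of_single_ne_zero [DecidableEq V] {v w : V}
    (h : Pi.single (M := fun _ => ℝ) v 1 w ≠ 0) : w = v := by
  by_contra h'
  simp [h'] at h

variable [Fintype V]

/-- The realization of the independence complex of the subgraph of `G` induced on `S`, as a subset
of `V → ℝ`. -/
def indepRealization (G : SimpleGraph V) (S : Set V) : Set (V → ℝ) :=
  {x | x ∈ stdSimplex ℝ V ∧ (∀ v, x v ≠ 0 → v ∈ S) ∧ ∀ v w, x v ≠ 0 → x w ≠ 0 → ¬G.Adj v w}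

theorem mem_indepRealization_of_support {x y : V → ℝ} (hx : x ∈ indepRealization G S)
    (hy : y ∈ stdSimplex ℝ V) (h : ∀ v, y v ≠ 0 → x v ≠ 0) : y ∈ indepRealization G S :=
  ⟨hy, fun v hv => hx.2.1 v (h v hv), fun v w hv hw => hx.2.2 v w (h v hv) (h w hw)⟩

theorem segment_subset_indepRealization {p x : V → ℝ} (hp : p ∈ indepRealization G S)
    (hx : x ∈ indepRealization G S) (h : ∀ v w, p v ≠ 0 → x w ≠ 0 → ¬G.Adj v w) :
    segment ℝ p x ⊆ indepRealization G S := by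
  intro y hy
  have hyS : y ∈ stdSimplex ℝ V := (convex_stdSimplex ℝ V).segment_subset hp.1 hx.1 hy
  obtain ⟨a, b, -, -, -, rfl⟩ := hy
  have hsupp : ∀ v, (a • p + b • x) v ≠ 0 → p v ≠ 0 ∨ x v ≠ 0 := fun v hv => by
    by_contra! h'
    simp [h'.1, h'.2] at hv
  refine ⟨hyS, fun v hv => (hsupp v hv).elim (hp.2.1 v) (hx.2.1 v), fun v w hv hw => ?_⟩
  rcases hsupp v hv with hv | hv <;> rcases hsupp w hw with hw | hw
  exacts [hp.2.2 v w hv hw, h v w hv hw, fun h' => h w v hw hv h'.symm, hx.2.2 v w hv hw]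

theorem segment_subset_indepRealization_of_support {p x : V → ℝ} (hp : p ∈ stdSimplex ℝ V)
    (hx : x ∈ indepRealization G S) (h : ∀ v, p v ≠ 0 → x v ≠ 0) :
    segment ℝ p x ⊆ indepRealization G S :=
  segment_subset_indepRealization (mem_indepRealization_of_support hx hp h) hx
    fun v w hv hw => hx.2.2 v w (h v hv) hw

theorem eraseVertex_mem_stdSimplex {v : V} {x : V → ℝ} (hx : x ∈ stdSimplex ℝ V) (hv : x v < 1) :
    eraseVertex v x ∈ stdSimplex ℝ V := by
  classical
  have h1 : 0 < 1 - x v := by linarith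
  refine ⟨fun w => ?_, ?_⟩
  · unfold eraseVertex
    split_ifs
    exacts [le_rfl, div_nonneg (hx.1 w) h1.le]
  · have hsum := hx.2
    rw [← Finset.add_sum_erase _ _ (Finset.mem_univ v)] at hsum ⊢
    have herase : ∀ w ∈ Finset.univ.erase v, eraseVertex v x w = x w / (1 - x v) :=
      fun w hw => if_neg (Finset.ne_of_mem_erase hw)
    rw [eraseVertex_self, zero_add, Finset.sum_congr rfl herase, ← Finset.sum_div,
      div_eq_one_iff_eq h1.ne']
    linarith

theorem mem_indepRealization_univ {x : V → ℝ} :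
    x ∈ indepRealization G Set.univ ↔
      (∀ v, 0 ≤ x v) ∧ (∑ᶠ v, x v) = 1 ∧ ∃ s ∈ indepFaces G, {v | x v ≠ 0} = ↑s := by
  classical
  rw [finsum_eq_sum_of_fintype]
  simp only [indepRealization, stdSimplex, indepFaces, Set.mem_ofPred_eq, Set.mem_univ,
    implies_true, true_and, and_assoc]
  refine and_congr_right fun _ => and_congr_right fun _ => ⟨fun h => ?_, ?_⟩
  · exact ⟨Finset.univ.filter fun v => x v ≠ 0, fun a ha b hb => h a b (by simpa using ha)
      (by simpa using hb), by simp⟩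
  · rintro ⟨s, hs, hxs⟩ a b ha hb
    exact hs a (by simpa [← hxs] using ha : a ∈ (s : Set V))
      b (by simpa [← hxs] using hb : b ∈ (s : Set V))

theorem SphereExtends.indepRealization_lt_one {v : V} {d : ℕ}
    (h : SphereExtends d (indepRealization G (S \ {v}))) :
    SphereExtends d (indepRealization G S ∩ {x | x v < 1}) := by
  refine h.of_segment_subset (i := id) (r := eraseVertex v) continuousOn_id (fun x hx => ?_)
    (continuousOn_eraseVertex v fun x hx => hx.2) (fun x hx => ?_) fun x hx y hy => ?_
  · refine ⟨⟨hx.1, fun w hw => (hx.2.1 w hw).1, hx.2.2⟩, ?_⟩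
    have : x v = 0 := by
      by_contra h
      exact (hx.2.1 v h).2 rfl
    simp [this]
  · have hne := fun w => eraseVertex_ne_zero (v := v) (w := w) (x := x)
    exact ⟨eraseVertex_mem_stdSimplex hx.1.1 hx.2,
      fun w hw => ⟨hx.1.2.1 w (hne w hw).2, (hne w hw).1⟩,
      fun a b ha hb => hx.1.2.2 a b (hne a ha).2 (hne b hb).2⟩
  · refine ⟨segment_subset_indepRealization_of_support (eraseVertex_mem_stdSimplex hx.1.1 hx.2) hx.1
      (fun w hw => (eraseVertex_ne_zero hw).2) hy, ?_⟩
    exact (convex_setOf_apply_lt_one v).segment_subset (by simp [eraseVertex_self]) hx.2 hy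

variable [DecidableEq V]

theorem single_mem_indepRealization {v : V} (hv : v ∈ S) :
    Pi.single v 1 ∈ indepRealization G S :=
  ⟨single_mem_stdSimplex ℝ v, fun w hw => eq_of_single_ne_zero hw ▸ hv, fun a b ha hb => by
    rw [eq_of_single_ne_zero ha, eq_of_single_ne_zero hb]
    exact G.irrefl⟩

theorem extendsBelow_indepRealization_of_isolated {v : V} (hv : v ∈ S)
    (hS : ∀ w ∈ S, ¬G.Adj v w) (m : ℕ) : ExtendsBelow m (indepRealization G S) := fun d _ =>
  sphereExtends_of_segment_subset (single_mem_indepRealization hv) (fun _ hx =>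
    segment_subset_indepRealization (single_mem_indepRealization hv) hx fun _ b ha hb =>
      eq_of_single_ne_zero ha ▸ hS b (hx.2.1 b hb)) d

theorem sphereExtends_indepRealization_pos {v : V} (hv : v ∈ S) (d : ℕ) :
    SphereExtends d (indepRealization G S ∩ {x | 0 < x v}) := by
  have hp : Pi.single v 1 ∈ indepRealization G S ∩ {x | 0 < x v} :=
    ⟨single_mem_indepRealization hv, by simp⟩
  exact sphereExtends_of_segment_subset hp (fun x hx y hy =>
    ⟨segment_subset_indepRealization_of_support (single_mem_stdSimplex ℝ v) hx.1
      (fun w hw => eq_of_single_ne_zero hw ▸ hx.2.ne') hy,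
      (convex_setOf_apply_pos v).segment_subset hp.2 hx.2 hy⟩) d

theorem SphereExtends.indepRealization_link {v : V} (hv : v ∈ S) {d : ℕ}
    (h : SphereExtends d (indepRealization G {w | w ∈ S ∧ w ≠ v ∧ ¬G.Adj v w})) :
    SphereExtends d
      ((indepRealization G S ∩ {x | x v < 1}) ∩ (indepRealization G S ∩ {x | 0 < x v})) := by
  let i : (V → ℝ) → V → ℝ := fun y => (1 / 2 : ℝ) • y + (1 / 2 : ℝ) • Pi.single v 1
  have hi : ∀ y ∈ stdSimplex ℝ V, i y ∈ stdSimplex ℝ V := fun y hy =>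
    convex_stdSimplex ℝ V hy (single_mem_stdSimplex ℝ v) (by norm_num) (by norm_num) (by norm_num)
  have hiv : ∀ y : V → ℝ, y v = 0 → i y v = 1 / 2 := fun y hy => by simp [i, hy]
  have hisupp : ∀ y w, i y w ≠ 0 → w = v ∨ y w ≠ 0 := fun y w hw => by
    by_contra! h
    simp [i, h.1, h.2] at hw
  refine h.of_segment_subset (i := i) (r := eraseVertex v) (by fun_prop) (fun y hy => ?_)
    (continuousOn_eraseVertex v fun x hx => hx.1.2) (fun x hx => ?_) fun x hx y hy => ?_
  · have hyv : y v = 0 := by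
      by_contra h
      exact (hy.2.1 v h).2.1 rfl
    have hiS : i y ∈ indepRealization G S := by
      refine ⟨hi y hy.1, fun w hw => ?_, fun a b ha hb => ?_⟩
      · rcases hisupp y w hw with rfl | hw
        exacts [hv, (hy.2.1 w hw).1]
      · rcases hisupp y a ha with rfl | ha' <;> rcases hisupp y b hb with rfl | hb'
        exacts [G.irrefl, (hy.2.1 b hb').2.2, fun h => (hy.2.1 a ha').2.2 h.symm,
          hy.2.2 a b ha' hb']
    have h2 : i y v < 1 ∧ 0 < i y v := by rw [hiv y hyv]; norm_num
    exact ⟨⟨hiS, h2.1⟩, hiS, h2.2⟩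
  · have hne := fun w => eraseVertex_ne_zero (v := v) (w := w) (x := x)
    exact ⟨eraseVertex_mem_stdSimplex hx.1.1.1 hx.1.2,
      fun w hw => ⟨hx.1.1.2.1 w (hne w hw).2, (hne w hw).1,
        hx.1.1.2.2 v w hx.2.2.ne' (hne w hw).2⟩,
      fun a b ha hb => hx.1.1.2.2 a b (hne a ha).2 (hne b hb).2⟩
  · have hyS := segment_subset_indepRealization_of_support
      (hi _ (eraseVertex_mem_stdSimplex hx.1.1.1 hx.1.2)) hx.1.1 (fun w hw => by
        rcases hisupp _ w hw with rfl | hw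
        exacts [hx.2.2.ne', (eraseVertex_ne_zero hw).2]) hy
    have h2 := hiv _ (eraseVertex_self v x)
    exact ⟨⟨hyS, (convex_setOf_apply_lt_one v).segment_subset
        (by rw [Set.mem_ofPred_eq, h2]; norm_num) hx.1.2 hy⟩,
      hyS, (convex_setOf_apply_pos v).segment_subset (by rw [Set.mem_ofPred_eq, h2]; norm_num) hx.2.2 hy⟩

/-- Adding a vertex `v` to an induced subgraph attaches to its independence complex a cone over
the independence complex of the non-neighbours of `v`. -/
theorem ExtendsBelow.indepRealization_of_vertex {v : V} {m : ℕ} (hv : v ∈ S)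
    (hdel : ExtendsBelow (m + 1) (indepRealization G (S \ {v})))
    (hlink : ExtendsBelow m (indepRealization G {w | w ∈ S ∧ w ≠ v ∧ ¬G.Adj v w})) :
    ExtendsBelow (m + 1) (indepRealization G S) := fun d hd =>
  SphereExtends.of_isOpen_cover (U := {x : V → ℝ | x v < 1})
    (V := {x : V → ℝ | 0 < x v})
    (isOpen_lt (continuous_apply v) continuous_const)
    (isOpen_lt continuous_const (continuous_apply v))
    (fun x _ => (lt_or_ge (x v) 1).imp (fun h => h) fun h => zero_lt_one.trans_le h)
    (fun d' hd' => (hdel d' (by omega)).indepRealization_lt_one)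
    (fun d' _ => sphereExtends_indepRealization_pos hv d')
    (fun d' hd' => (hlink d' (by omega)).indepRealization_link hv)

end IndepRealization

theorem isNConnected_realization_indepFaces {V : Type*} [Fintype V] {G : SimpleGraph V} {m : ℕ}
    {n : ℤ} (hn : n + 2 ≤ m) (h : ExtendsBelow m (indepRealization G Set.univ)) :
    IsNConnected n (realization (indepFaces G)) := by
  refine ⟨fun hn' => ?_, fun i hi f => ?_⟩
  · obtain ⟨g, -, hg, -⟩ := h 0 (by omega) 0 continuousOn_const fun x hx => by
      simp [Subsingleton.elim x 0] at hx
    exact ⟨⟨g 0, mem_indepRealization_univ.1 (hg (by simp))⟩⟩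
  · classical
    let F : EuclideanSpace ℝ (Fin (i + 1)) → V → ℝ := fun y =>
      if hy : y ∈ Metric.sphere 0 1 then (f ⟨y, hy⟩).1 else 0
    have hF (y : Metric.sphere (0 : EuclideanSpace ℝ (Fin (i + 1))) 1) : F y = (f y).1 :=
      dif_pos y.2
    obtain ⟨g, hgc, hg, hgF⟩ := h (i + 1) (by omega) F
      (continuousOn_iff_continuous_domRestrict.2
        ((continuous_subtype_val.comp f.continuous).congr fun y => (hF y).symm))
      fun y hy => by
        rw [hF ⟨y, hy⟩]
        exact mem_indepRealization_univ.2 (f ⟨y, hy⟩).2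
    refine ⟨⟨fun y => ⟨g y, mem_indepRealization_univ.1 (hg y.2)⟩,
      (continuousOn_iff_continuous_domRestrict.1 hgc).subtype_mk _⟩, fun y => ?_⟩
    exact Subtype.ext ((hgF y.2).trans (hF y))

section CircGraph

variable {n k : ℕ}

theorem circGraphC_adj {x y : Fin n} :
    (circGraphC n k).Adj x y ↔ (x : ℕ) ≠ y ∧
      (((x : ℕ) < y ∧ ((y : ℕ) - x < k ∨ n + x - y < k)) ∨
        ((y : ℕ) < x ∧ ((x : ℕ) - y < k ∨ n + y - x < k))) := by
  simp only [circGraphC, SimpleGraph.fromRel_adj, ne_eq, Fin.ext_iff]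

/-- On an interval of vertices too short to wrap around the cycle, `circGraphC` is the power of a
path, and each `2 * k - 1` vertices contribute one degree of connectivity. -/
theorem extendsBelow_indepRealization_interval (hk : 1 ≤ k) {b : ℕ} (hb : b ≤ n) (e : ℕ) :
    ∀ {a : ℕ}, b + k ≤ n + 1 + a → a + e * (2 * k - 1) < b + (2 * k - 1) →
      ExtendsBelow e (indepRealization (circGraphC n k) {x | a ≤ x ∧ (x : ℕ) < b}) := by
  induction e with
  | zero => exact fun _ _ d hd => (Nat.not_lt_zero d hd).elim
  | succ e ih =>
    intro a hab he
    rw [Nat.succ_mul] at he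
    let T : ℕ → Set (Fin n) := fun j => {x | (a ≤ x ∧ (x : ℕ) < b) ∧ ((x : ℕ) ≤ a ∨ a + j < x)}
    have hT : ExtendsBelow (e + 1) (indepRealization (circGraphC n k) (T 0)) := by
      refine Nat.decreasingInduction' (n := k - 1)
        (P := fun j => ExtendsBelow (e + 1) (indepRealization (circGraphC n k) (T j)))
        (fun j hj _ hind => ?_) (Nat.zero_le _) ?_
      · by_cases hjb : a + (j + 1) < b
        · let v : Fin n := ⟨a + (j + 1), by omega⟩
          refine ExtendsBelow.indepRealization_of_vertex (v := v) ?_ ?_ ?_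
          · simp only [T, v, Set.mem_ofPred_eq]
            omega
          · convert hind using 2
            ext x
            simp only [T, v, Set.mem_ofPred_eq, Set.mem_sdiff, Set.mem_singleton_iff, Fin.ext_iff]
            omega
          · convert ih (a := a + (j + 1) + k) (by omega) (by omega) using 2
            ext x
            simp only [T, v, Set.mem_ofPred_eq, circGraphC_adj, ne_eq, Fin.ext_iff]
            omega
        · convert hind using 2
          ext x
          simp only [T, Set.mem_ofPred_eq]
          omega
      · refine extendsBelow_indepRealization_of_isolated (v := ⟨a, by omega⟩) ?_ (fun w hw => ?_) _
        · simp only [T, Set.mem_ofPred_eq]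
          omega
        · simp only [T, Set.mem_ofPred_eq, circGraphC_adj] at hw ⊢
          omega
    convert hT using 2
    ext x
    simp only [T, Set.mem_ofPred_eq]
    omega

theorem extendsBelow_indepRealization_circGraphC (hk : 2 ≤ k) (hn : 2 * k - 1 ≤ n + 1) :
    ExtendsBelow ((n + 1) / (2 * k - 1)) (indepRealization (circGraphC n k) Set.univ) := by
  have hk' : 1 ≤ k := by omega
  obtain ⟨e, he⟩ := Nat.exists_eq_add_of_le' ((Nat.one_le_div_iff (by omega)).2 hn)
  have hle := Nat.div_mul_le_self (n + 1) (2 * k - 1)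
  rw [he, Nat.succ_mul] at hle
  rw [he]
  have hT : ExtendsBelow (e + 1) (indepRealization (circGraphC n k) {x | 0 ≤ (x : ℕ)}) := by
    refine Nat.decreasingInduction' (n := k - 1)
      (P := fun j => ExtendsBelow (e + 1) (indepRealization (circGraphC n k) {x | j ≤ (x : ℕ)}))
      (fun j hj _ hind => ?_) (Nat.zero_le _) ?_
    · by_cases hjn : j < n
      · let v : Fin n := ⟨j, hjn⟩
        refine ExtendsBelow.indepRealization_of_vertex (v := v) ?_ ?_ ?_
        · simp only [v, Set.mem_ofPred_eq, le_refl]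
        · convert hind using 2
          ext x
          simp only [v, Set.mem_ofPred_eq, Set.mem_sdiff, Set.mem_singleton_iff, Fin.ext_iff]
          omega
        · convert extendsBelow_indepRealization_interval (n := n) hk' (b := n + j + 1 - k) (by omega) e
            (a := j + k) (by omega) (by omega) using 2
          ext x
          simp only [v, Set.mem_ofPred_eq, circGraphC_adj, ne_eq, Fin.ext_iff]
          omega
      · convert hind using 2
        ext x
        simp only [Set.mem_ofPred_eq]
        omega
    · convert extendsBelow_indepRealization_interval (n := n) hk' le_rfl (e + 1) (a := k - 1)
        (by omega) (by rw [Nat.succ_mul]; omega) using 2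
      ext x
      simp only [Set.mem_ofPred_eq]
      omega
  simpa using hT

end CircGraph

/-- If `k ≥ 2` and `n ≥ 6(k-1)`, then `Ind(C^k_n)` is
`⌊(n+1)/(2k-1) - 2⌋`-connected. -/
theorem indComplex_circGraph_connectivity {n k : ℕ} (hk : 2 ≤ k)
    (hn : 6 * (k - 1) ≤ n) :
    IsNConnected ⌊((n : ℚ) + 1) / (2 * k - 1) - 2⌋
      (realization (indepFaces (circGraphC n k))) := by
  refine isNConnected_realization_indepFaces ?_
    (extendsBelow_indepRealization_circGraphC hk (by omega))
  have hcast : ((n : ℚ) + 1) / (2 * k - 1) = ((n + 1 : ℕ) : ℚ) / ((2 * k - 1 : ℕ) : ℚ) := by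
    rw [Nat.cast_sub (by omega)]
    push_cast
    rfl
  rw [Int.floor_sub_ofNat, hcast, ← Int.natCast_floor_eq_floor (by positivity),
    Nat.floor_div_eq_div]
  simp
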